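/- Let Φ̊ ⊂ ℝⁿ be the root system of type C_n with n ≥ 2. Then the set Φ̊_s of short roots is a maximal semi-closed subroot system of Φ̊, and it is the unique one: every maximal semi-closed subroot system of Φ̊ equals Φ̊_s. -/

import Mathlib

open scoped RealInnerProductSpace Pointwise

noncomputable section

namespace BdS

variable {V Y : Type*} [NormedAddCommGroup V] [InnerProductSpace ℝ V]
variable [AddCommGroup Y] [Module ℝ Y]

/-- `pairing β α = (β, α∨) = 2(β,α)/(α,α)`. -/
def pairing (β α : V) : ℝ := 2 * ⟪β, α⟫ / ⟪α, α⟫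

/-- `reflRoot α v = s_α(v) = v − (v, α∨)α`. -/
def reflRoot (α v : V) : V := v - pairing v α • α

/-- A (finite) root system in `V`. -/
def IsRootSystem (Φ : Set V) : Prop :=
  Φ.Finite ∧ (0 : V) ∉ Φ ∧ Submodule.span ℝ Φ = ⊤ ∧
    (∀ α ∈ Φ, ∀ β ∈ Φ, reflRoot α β ∈ Φ) ∧
    ∀ α ∈ Φ, ∀ β ∈ Φ, ∃ m : ℤ, pairing β α = (m : ℝ)

def IsReduced (Φ : Set V) : Prop :=
  ∀ α ∈ Φ, ∀ c : ℝ, c • α ∈ Φ → c • α = α ∨ c • α = -α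

def IsIrreducible (Φ : Set V) : Prop :=
  ∀ Φ₁ Φ₂ : Set V, Φ = Φ₁ ∪ Φ₂ → (∀ x ∈ Φ₁, ∀ y ∈ Φ₂, ⟪x, y⟫ = 0) →
    Φ₁ = ∅ ∨ Φ₂ = ∅

/-- divisible roots -/
def divSet (Φ : Set V) : Set V := {α ∈ Φ | (2:ℝ)⁻¹ • α ∈ Φ}
/-- non-divisible roots -/
def ndSet (Φ : Set V) : Set V := Φ \ divSet Φ
/-- short roots: non-divisible roots of non-maximal squared length -/
def shortSet (Φ : Set V) : Set V := {α ∈ ndSet Φ | ∃ β ∈ ndSet Φ, ⟪α, α⟫ < ⟪β, β⟫}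
/-- long roots -/
def longSet (Φ : Set V) : Set V := ndSet Φ \ shortSet Φ

/-- An extension datum of type `(Φ, Y)`. -/
def IsExtensionDatum (Φ : Set V) (Λ : V → Set Y) : Prop :=
  (∀ α ∈ Φ, ∀ β ∈ Φ, ∀ z ∈ Λ α, ∀ y ∈ Λ β, y - pairing β α • z ∈ Λ (reflRoot α β)) ∧
  (0 : Y) ∈ Λ 0 ∧
  (∀ α ∈ ndSet Φ, (0 : Y) ∈ Λ α) ∧
  (∀ α ∈ divSet Φ, (Λ α).Nonempty) ∧
  Submodule.span ℝ (⋃ α ∈ insert (0 : V) Φ, Λ α) = ⊤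

/-- subroot system of a finite root system -/
def IsSubRS (Φ Δ : Set V) : Prop :=
  Δ.Nonempty ∧ Δ ⊆ Φ ∧ ∀ α ∈ Δ, ∀ β ∈ Δ, reflRoot α β ∈ Δ

def IsClosedSubRS (Φ Δ : Set V) : Prop :=
  IsSubRS Φ Δ ∧ ∀ α ∈ Δ, ∀ β ∈ Δ, α + β ∈ Φ → α + β ∈ Δ

def IsMaxClosedSubRS (Φ Δ : Set V) : Prop :=
  IsClosedSubRS Φ Δ ∧ Δ ≠ Φ ∧
    ∀ Δ' : Set V, IsClosedSubRS Φ Δ' → Δ' ≠ Φ → Δ ⊆ Δ' → Δ' = Δ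

/-- semi-closed subroot system, relative to given short/long/divisible parts -/
def IsSemiClosedSubRS (Φ Φs Φl Φd Δ : Set V) : Prop :=
  IsSubRS Φ Δ ∧ ¬ (∀ α ∈ Δ, ∀ β ∈ Δ, α + β ∈ Φ → α + β ∈ Δ) ∧
    ∀ α ∈ Δ, ∀ β ∈ Δ, α + β ∈ Φ → α + β ∉ Δ →
      (α ∈ Φs ∧ β ∈ Φs ∧ α + β ∈ Φl ∪ Φd) ∨ (α ∈ Φl ∧ β ∈ Φl ∧ α + β ∈ Φd)

def IsMaxSemiClosedSubRS (Φ Φs Φl Φd Δ : Set V) : Prop :=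
  IsSemiClosedSubRS Φ Φs Φl Φd Δ ∧
    ∀ Δ' : Set V, IsClosedSubRS Φ Δ' → Δ' ≠ Φ → ¬ Δ ⊂ Δ'

/-- the set of real roots attached to an extension datum -/
def PhiRe (Φ : Set V) (Λ : V → Set Y) : Set (V × Y) := {x | x.1 ∈ Φ ∧ x.2 ∈ Λ x.1}

/-- affine reflection `s_{α ⊕ y}(β ⊕ z) = s_α(β) ⊕ (z − (β,α∨)y)` -/
def reflAff (a x : V × Y) : V × Y := (reflRoot a.1 x.1, x.2 - pairing x.1 a.1 • a.2)

/-- subroot system of a set of real roots `R` -/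
def IsSubSys (R Ψ : Set (V × Y)) : Prop :=
  Ψ.Nonempty ∧ Ψ ⊆ R ∧ Ψ ≠ R ∧ ∀ a ∈ Ψ, ∀ x ∈ Ψ, reflAff a x ∈ Ψ

def IsClosedSubSys (R Ψ : Set (V × Y)) : Prop :=
  IsSubSys R Ψ ∧ ∀ x ∈ Ψ, ∀ y ∈ Ψ, x + y ∈ R → x + y ∈ Ψ

def IsMaxClosedSubSys (R Ψ : Set (V × Y)) : Prop :=
  IsClosedSubSys R Ψ ∧ ∀ Ψ' : Set (V × Y), IsClosedSubSys R Ψ' → Ψ ⊆ Ψ' → Ψ' = Ψ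

/-- gradient of a subroot system -/
def Gr (Ψ : Set (V × Y)) : Set V := {α | ∃ y : Y, (α, y) ∈ Ψ}

def Zset (Ψ : Set (V × Y)) (α : V) : Set Y := {y | (α, y) ∈ Ψ}

abbrev E (n : ℕ) := EuclideanSpace ℝ (Fin n)

def eps {n : ℕ} (i : Fin n) : E n := EuclideanSpace.single i 1

def shortBC (n : ℕ) : Set (E n) := {v | ∃ i : Fin n, v = eps i ∨ v = -eps i}

def longBC (n : ℕ) : Set (E n) :=
  {v | ∃ i j : Fin n, i ≠ j ∧ ∃ c d : ℝ, (c = 1 ∨ c = -1) ∧ (d = 1 ∨ d = -1) ∧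
    v = c • eps i + d • eps j}

def divBC (n : ℕ) : Set (E n) :=
  {v | ∃ i : Fin n, v = (2:ℝ) • eps i ∨ v = -((2:ℝ) • eps i)}

def BCn (n : ℕ) : Set (E n) := shortBC n ∪ longBC n ∪ divBC n
def Bn (n : ℕ) : Set (E n) := shortBC n ∪ longBC n
def Cn (n : ℕ) : Set (E n) := longBC n ∪ divBC n

/-!
Let `S = {±εᵢ}`, which is `shortBC n`. Every root of `C_n` is a difference `x - y` of distinct
elements of `S`; it is short (an element of `longBC n`) when `x ⟂ y`, and long (an element of
`divBC n`) when `y = -x`. The reflection in `x - y` swaps `x` and `y`.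

If a subroot system `Δ` is maximal semi-closed, then `Φ ∩ ℤΔ` is a closed subroot system strictly
containing `Δ`, hence all of `Φ`. So `Δ` generates the root lattice, and a parity argument shows
that any two elements of `S` are linked by `Δ` up to sign. A failure of closedness is a pair of
short roots `x - y`, `x + y ∈ Δ` with `2x ∉ Δ`. Reflecting along links moves the pair around, which
puts every short root in `Δ`, and would bring any long root of `Δ` to `±2x`.
-/

section Reflection

lemma reflRoot_eq_reflection (α v : V) : reflRoot α v = (ℝ ∙ α)ᗮ.reflection v := by
  rw [Submodule.reflection_orthogonal_apply, Submodule.reflection_singleton_apply, reflRoot,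
    pairing, real_inner_self_eq_norm_sq, real_inner_comm, RCLike.ofReal_real_eq_id, id]
  module

lemma reflRoot_map_neg (α v : V) : reflRoot α (-v) = -reflRoot α v := by
  simp only [reflRoot_eq_reflection, map_neg]

lemma reflRoot_map_sub (α v w : V) : reflRoot α (v - w) = reflRoot α v - reflRoot α w := by
  simp only [reflRoot_eq_reflection, map_sub]

lemma reflRoot_map_smul (α : V) (c : ℝ) (v : V) : reflRoot α (c • v) = c • reflRoot α v := by
  simp only [reflRoot_eq_reflection, map_smul]

lemma reflRoot_injective (α : V) : Function.Injective (reflRoot α) := by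
  simpa only [funext (reflRoot_eq_reflection α)] using (ℝ ∙ α)ᗮ.reflection.injective

lemma inner_reflRoot_reflRoot (α v w : V) : ⟪reflRoot α v, reflRoot α w⟫ = ⟪v, w⟫ := by
  simp only [reflRoot_eq_reflection, LinearIsometryEquiv.inner_map_map]

lemma reflRoot_self (α : V) : reflRoot α α = -α := by
  rw [reflRoot_eq_reflection, Submodule.reflection_orthogonalComplement_singleton_eq_neg]

lemma reflRoot_of_inner_eq_zero {α v : V} (h : ⟪v, α⟫ = 0) : reflRoot α v = v := by
  simp [reflRoot, pairing, h]

lemma reflRoot_sub_left {x y : V} (h : ‖x‖ = ‖y‖) : reflRoot (x - y) x = y := by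
  rw [reflRoot_eq_reflection, Submodule.reflection_sub h]

lemma reflRoot_sub_right {x y : V} (h : ‖x‖ = ‖y‖) : reflRoot (x - y) y = x := by
  have hself := reflRoot_self (x - y)
  rw [reflRoot_map_sub, reflRoot_sub_left h] at hself
  rw [← sub_sub_cancel y (reflRoot (x - y) y), hself]
  abel

end Reflection

section ReflectionClosed

variable {Δ : Set V} (hΔ : ∀ α ∈ Δ, ∀ β ∈ Δ, reflRoot α β ∈ Δ)
include hΔ

lemma neg_mem_of_reflRoot_mem {α : V} (hα : α ∈ Δ) : -α ∈ Δ :=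
  reflRoot_self α ▸ hΔ α hα α hα

lemma sub_mem_comm {x y : V} (h : x - y ∈ Δ) : y - x ∈ Δ :=
  neg_sub x y ▸ neg_mem_of_reflRoot_mem hΔ h

lemma sub_mem_trans {x y z : V} (hyz : ‖y‖ = ‖z‖) (hxy : ⟪x, y⟫ = 0) (hxz : ⟪x, z⟫ = 0)
    (h₁ : x - y ∈ Δ) (h₂ : y - z ∈ Δ) : x - z ∈ Δ := by
  have hx : reflRoot (y - z) x = x :=
    reflRoot_of_inner_eq_zero (by rw [inner_sub_right, hxy, hxz, sub_zero])
  simpa only [reflRoot_map_sub, hx, reflRoot_sub_left hyz] using hΔ _ h₂ _ h₁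

lemma smul_mem_of_sub_mem {x y : V} {c : ℝ} (hxy : ‖x‖ = ‖y‖) (h : x - y ∈ Δ)
    (hx : c • x ∈ Δ) : c • y ∈ Δ := by
  simpa only [reflRoot_map_smul, reflRoot_sub_left hxy] using hΔ _ h _ hx

lemma add_mem_of_sub_mem {x y z : V} (hyz : ‖y‖ = ‖z‖) (hxz : ‖x‖ = ‖z‖)
    (hxy₀ : ⟪x, y⟫ = 0) (hxz₀ : ⟪x, z⟫ = 0) (hyz₀ : ⟪y, z⟫ = 0)
    (hsub : x - y ∈ Δ) (hadd : x + y ∈ Δ) (hz : x - z ∈ Δ) : x + z ∈ Δ := by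
  have hyx₀ : ⟪y, x⟫ = 0 := by rw [real_inner_comm, hxy₀]
  have hzy : z - y ∈ Δ :=
    sub_mem_comm hΔ (sub_mem_trans hΔ hxz hyx₀ hyz₀ (sub_mem_comm hΔ hsub) hz)
  simpa only [sub_neg_eq_add] using
    sub_mem_trans hΔ (y := -y) (z := -z) (by rwa [norm_neg, norm_neg])
      (by rw [inner_neg_right, hxy₀, neg_zero]) (by rw [inner_neg_right, hxz₀, neg_zero])
      (by rwa [sub_neg_eq_add]) (by rwa [neg_sub_neg])

end ReflectionClosed

section Lattice

/-- The two conditions on a set of roots that make its intersections with lattices closed subroot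
systems; unlike in `IsRootSystem`, finiteness and spanning are not required. -/
def IsCrystallographic (Φ : Set V) : Prop :=
  (∀ α ∈ Φ, ∀ β ∈ Φ, reflRoot α β ∈ Φ) ∧ ∀ α ∈ Φ, ∀ β ∈ Φ, ∃ m : ℤ, pairing β α = m

lemma IsCrystallographic.isClosedSubRS_inter {Φ : Set V} (hΦ : IsCrystallographic Φ)
    (H : AddSubgroup V) (hne : (Φ ∩ H).Nonempty) : IsClosedSubRS Φ (Φ ∩ H) := by
  refine ⟨⟨hne, Set.inter_subset_left, ?_⟩, fun α hα β hβ h => ⟨h, H.add_mem hα.2 hβ.2⟩⟩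
  rintro α ⟨hα, hαH⟩ β ⟨hβ, hβH⟩
  obtain ⟨m, hm⟩ := hΦ.2 α hα β hβ
  refine ⟨hΦ.1 α hα β hβ, ?_⟩
  rw [reflRoot, hm, Int.cast_smul_eq_zsmul]
  exact H.sub_mem hβH (H.zsmul_mem hαH m)

lemma IsMaxSemiClosedSubRS.subset_closure {Φ Φs Φl Φd Δ : Set V} (hΦ : IsCrystallographic Φ)
    (h : IsMaxSemiClosedSubRS Φ Φs Φl Φd Δ) : Φ ⊆ AddSubgroup.closure Δ := by
  obtain ⟨⟨⟨hne, hsub, -⟩, hnot, -⟩, hmax⟩ := h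
  have hle : Δ ⊆ Φ ∩ AddSubgroup.closure Δ := Set.subset_inter hsub AddSubgroup.subset_closure
  have hcl := hΦ.isClosedSubRS_inter _ (hne.mono hle)
  by_contra hcon
  exact hmax _ hcl (fun heq => hcon (Set.inter_eq_left.1 heq))
    (hle.ssubset_of_ne fun heq => hnot (heq ▸ hcl.2))

end Lattice

section SignedBasis

variable {n : ℕ} {x y v : E n}

lemma inner_eps (v : E n) (i : Fin n) : ⟪v, eps i⟫ = v i := by
  simp [eps, EuclideanSpace.inner_single_right]

lemma inner_eps_eps (i j : Fin n) : ⟪(eps i : E n), eps j⟫ = if i = j then 1 else 0 := by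
  rw [inner_eps, eps, PiLp.single_apply]
  simp only [eq_comm]

lemma eps_mem_shortBC (i : Fin n) : eps i ∈ shortBC n := ⟨i, .inl rfl⟩

lemma neg_mem_shortBC (hx : x ∈ shortBC n) : -x ∈ shortBC n := by
  obtain ⟨i, rfl | rfl⟩ := hx
  · exact ⟨i, .inr rfl⟩
  · exact ⟨i, .inl (neg_neg _)⟩

lemma norm_of_mem_shortBC (hx : x ∈ shortBC n) : ‖x‖ = 1 := by
  obtain ⟨i, rfl | rfl⟩ := hx <;> simp [eps]

lemma inner_self_of_mem_shortBC (hx : x ∈ shortBC n) : ⟪x, x⟫ = 1 := by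
  rw [real_inner_self_eq_norm_sq, norm_of_mem_shortBC hx, one_pow]

lemma ne_of_mem_shortBC_of_inner_eq_zero (hx : x ∈ shortBC n) (h : ⟪x, y⟫ = 0) : x ≠ y := by
  rintro rfl
  exact one_ne_zero ((inner_self_of_mem_shortBC hx).symm.trans h)

lemma ne_neg_of_mem_shortBC (hx : x ∈ shortBC n) : x ≠ -x := by
  intro h
  have hneg : ⟪x, -x⟫ = 1 := by rw [← h, inner_self_of_mem_shortBC hx]
  rw [inner_neg_right, inner_self_of_mem_shortBC hx] at hneg
  norm_num at hneg

lemma eq_or_eq_neg_or_inner_eq_zero (hx : x ∈ shortBC n) (hy : y ∈ shortBC n) :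
    x = y ∨ x = -y ∨ ⟪x, y⟫ = 0 := by
  obtain ⟨i, hx⟩ := hx
  obtain ⟨j, hy⟩ := hy
  by_cases hij : i = j
  · subst hij
    rcases hx with rfl | rfl <;> rcases hy with rfl | rfl <;> simp
  · have h₀ : ⟪(eps i : E n), eps j⟫ = 0 := by rw [inner_eps_eps, if_neg hij]
    rcases hx with rfl | rfl <;> rcases hy with rfl | rfl <;> simp [h₀]

lemma exists_mem_shortBC_inner_eq_zero (hn : 2 ≤ n) (hx : x ∈ shortBC n) :
    ∃ y ∈ shortBC n, ⟪x, y⟫ = 0 := by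
  have : Nontrivial (Fin n) := Fin.nontrivial_iff_two_le.2 hn
  obtain ⟨i, hx⟩ := hx
  obtain ⟨j, hj⟩ := exists_ne i
  refine ⟨eps j, eps_mem_shortBC j, ?_⟩
  rcases hx with rfl | rfl <;> simp [inner_eps_eps, hj.symm]

lemma exists_int_inner_eq_of_mem_shortBC (hx : x ∈ shortBC n) (hy : y ∈ shortBC n) :
    ∃ m : ℤ, ⟪x, y⟫ = m := by
  rcases eq_or_eq_neg_or_inner_eq_zero hx hy with rfl | rfl | h
  · exact ⟨1, by rw [inner_self_of_mem_shortBC hx, Int.cast_one]⟩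
  · exact ⟨-1, by rw [inner_neg_left, inner_self_of_mem_shortBC hy, Int.cast_neg, Int.cast_one]⟩
  · exact ⟨0, by rw [h, Int.cast_zero]⟩

lemma exists_addSubgroup_sub_mem_iff {T : Set (E n)} (hT : ∀ x, -x ∈ T ↔ x ∈ T) :
    ∃ H : AddSubgroup (E n), ∀ x ∈ shortBC n, ∀ y ∈ shortBC n,
      (x - y ∈ H ↔ (x ∈ T ↔ y ∈ T)) := by
  classical
  -- `⟪w, x⟫` is odd exactly when `x ∈ T`, so `H` is cut out by the parity of `⟪w, ·⟫`.
  let w : E n := WithLp.toLp 2 ({i | eps i ∈ T}.indicator 1)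
  have hw : ∀ x ∈ shortBC n, ∃ m : ℤ, ⟪w, x⟫ = m ∧ (Odd m ↔ x ∈ T) := by
    have heps : ∀ i, ∃ m : ℤ, ⟪w, eps i⟫ = m ∧ (Odd m ↔ eps i ∈ T) := fun i =>
      ⟨if eps i ∈ T then 1 else 0, by simp [w, inner_eps, Set.indicator_apply],
        by split_ifs with hi <;> simp [hi]⟩
    rintro x ⟨i, rfl | rfl⟩
    · exact heps i
    · obtain ⟨m, hm, hodd⟩ := heps i
      exact ⟨-m, by rw [inner_neg_right, hm, Int.cast_neg], by rw [odd_neg, hodd, hT]⟩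
  refine ⟨(AddSubgroup.zmultiples (2 : ℝ)).comap (innerₗ (E n) w).toAddMonoidHom, ?_⟩
  intro x hx y hy
  obtain ⟨p, hp, hpT⟩ := hw x hx
  obtain ⟨q, hq, hqT⟩ := hw y hy
  have hmem : ⟪w, x - y⟫ ∈ AddSubgroup.zmultiples (2 : ℝ) ↔ Even (p - q) := by
    rw [inner_sub_right, hp, hq, AddSubgroup.mem_zmultiples_iff, even_iff_exists_two_mul]
    refine exists_congr fun k => ?_
    rw [zsmul_eq_mul, mul_comm, eq_comm]
    norm_cast
  rw [← hpT, ← hqT, ← Int.even_sub', ← hmem]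
  rfl

end SignedBasis

section TypeC

variable {n : ℕ} {x y v : E n}

lemma mem_longBC_iff :
    v ∈ longBC n ↔ ∃ x ∈ shortBC n, ∃ y ∈ shortBC n, ⟪x, y⟫ = 0 ∧ v = x - y := by
  constructor
  · rintro ⟨i, j, hij, c, d, hc, hd, rfl⟩
    refine ⟨c • eps i, ?_, (-d) • eps j, ?_, ?_, by module⟩
    · rcases hc with rfl | rfl
      · exact ⟨i, .inl (one_smul ..)⟩
      · exact ⟨i, .inr (neg_one_smul ..)⟩
    · rcases hd with rfl | rfl
      · exact ⟨j, .inr (neg_one_smul ..)⟩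
      · exact ⟨j, .inl (by rw [neg_neg, one_smul])⟩
    · rw [real_inner_smul_left, real_inner_smul_right, inner_eps_eps, if_neg hij]
      ring
  · rintro ⟨x, ⟨i, hx⟩, y, ⟨j, hy⟩, hxy, rfl⟩
    have hij : i ≠ j := by
      rintro rfl
      rcases hx with rfl | rfl <;> rcases hy with rfl | rfl <;> 
        simp only [inner_neg_left, inner_neg_right, inner_eps_eps, if_true] at hxy <;>
        norm_num at hxy
    obtain ⟨c, hc, rfl⟩ : ∃ c : ℝ, (c = 1 ∨ c = -1) ∧ x = c • eps i := by
      rcases hx with rfl | rfl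
      · exact ⟨1, .inl rfl, (one_smul ..).symm⟩
      · exact ⟨-1, .inr rfl, (neg_one_smul ..).symm⟩
    obtain ⟨d, hd, rfl⟩ : ∃ d : ℝ, (d = 1 ∨ d = -1) ∧ y = -(d • eps j) := by
      rcases hy with rfl | rfl
      · exact ⟨-1, .inr rfl, by module⟩
      · exact ⟨1, .inl rfl, by module⟩
    exact ⟨i, j, hij, c, d, hc, hd, sub_neg_eq_add _ _⟩

lemma sub_mem_longBC (hx : x ∈ shortBC n) (hy : y ∈ shortBC n) (h : ⟪x, y⟫ = 0) :
    x - y ∈ longBC n :=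
  mem_longBC_iff.2 ⟨x, hx, y, hy, h, rfl⟩

lemma add_mem_longBC (hx : x ∈ shortBC n) (hy : y ∈ shortBC n) (h : ⟪x, y⟫ = 0) :
    x + y ∈ longBC n :=
  mem_longBC_iff.2 ⟨x, hx, -y, neg_mem_shortBC hy, by rw [inner_neg_right, h, neg_zero],
    (sub_neg_eq_add x y).symm⟩

lemma mem_divBC_iff : v ∈ divBC n ↔ ∃ x ∈ shortBC n, v = (2 : ℝ) • x := by
  constructor
  · rintro ⟨i, h | h⟩
    · exact ⟨eps i, ⟨i, .inl rfl⟩, h⟩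
    · exact ⟨-eps i, ⟨i, .inr rfl⟩, by rw [h, smul_neg]⟩
  · rintro ⟨x, ⟨i, rfl | rfl⟩, rfl⟩
    · exact ⟨i, .inl rfl⟩
    · exact ⟨i, .inr (smul_neg ..)⟩

lemma mem_Cn_iff : v ∈ Cn n ↔ ∃ x ∈ shortBC n, ∃ y ∈ shortBC n, x ≠ y ∧ v = x - y := by
  constructor
  · rintro (h | h)
    · obtain ⟨x, hx, y, hy, hxy, rfl⟩ := mem_longBC_iff.1 h
      exact ⟨x, hx, y, hy, ne_of_mem_shortBC_of_inner_eq_zero hx hxy, rfl⟩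
    · obtain ⟨x, hx, rfl⟩ := mem_divBC_iff.1 h
      exact ⟨x, hx, -x, neg_mem_shortBC hx, ne_neg_of_mem_shortBC hx, by module⟩
  · rintro ⟨x, hx, y, hy, hne, rfl⟩
    rcases eq_or_eq_neg_or_inner_eq_zero hx hy with h | rfl | h
    · exact absurd h hne
    · exact .inr (mem_divBC_iff.2 ⟨-y, hx, by module⟩)
    · exact .inl (sub_mem_longBC hx hy h)

lemma inner_self_of_mem_longBC (hv : v ∈ longBC n) : ⟪v, v⟫ = 2 := by
  obtain ⟨x, hx, y, hy, h, rfl⟩ := mem_longBC_iff.1 hv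
  rw [real_inner_sub_sub_self, inner_self_of_mem_shortBC hx, inner_self_of_mem_shortBC hy, h]
  norm_num

lemma inner_self_of_mem_divBC (hv : v ∈ divBC n) : ⟪v, v⟫ = 4 := by
  obtain ⟨x, hx, rfl⟩ := mem_divBC_iff.1 hv
  rw [real_inner_smul_left, real_inner_smul_right, inner_self_of_mem_shortBC hx]
  norm_num

lemma mem_longBC_iff_mem_Cn : v ∈ longBC n ↔ v ∈ Cn n ∧ ⟪v, v⟫ = 2 := by
  refine ⟨fun h => ⟨.inl h, inner_self_of_mem_longBC h⟩, ?_⟩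
  rintro ⟨hC, h⟩
  refine hC.resolve_right fun hdiv => ?_
  linarith [inner_self_of_mem_divBC hdiv]

lemma reflRoot_mem_shortBC {α : E n} (hα : α ∈ Cn n) (hx : x ∈ shortBC n) :
    reflRoot α x ∈ shortBC n := by
  obtain ⟨y, hy, z, hz, -, rfl⟩ := mem_Cn_iff.1 hα
  have hyz : ‖y‖ = ‖z‖ := by rw [norm_of_mem_shortBC hy, norm_of_mem_shortBC hz]
  rcases eq_or_eq_neg_or_inner_eq_zero hx hy with rfl | rfl | hxy
  · rwa [reflRoot_sub_left hyz]
  · rw [reflRoot_map_neg, reflRoot_sub_left hyz]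
    exact neg_mem_shortBC hz
  rcases eq_or_eq_neg_or_inner_eq_zero hx hz with rfl | rfl | hxz
  · rwa [reflRoot_sub_right hyz]
  · rw [reflRoot_map_neg, reflRoot_sub_right hyz]
    exact neg_mem_shortBC hy
  rwa [reflRoot_of_inner_eq_zero (by rw [inner_sub_right, hxy, hxz, sub_zero])]

lemma reflRoot_mem_Cn {α β : E n} (hα : α ∈ Cn n) (hβ : β ∈ Cn n) : reflRoot α β ∈ Cn n := by
  obtain ⟨x, hx, y, hy, hne, rfl⟩ := mem_Cn_iff.1 hβ
  exact mem_Cn_iff.2 ⟨_, reflRoot_mem_shortBC hα hx, _, reflRoot_mem_shortBC hα hy,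
    (reflRoot_injective α).ne hne, reflRoot_map_sub α x y⟩

lemma reflRoot_mem_longBC {α β : E n} (hα : α ∈ Cn n) (hβ : β ∈ longBC n) :
    reflRoot α β ∈ longBC n := by
  rw [mem_longBC_iff_mem_Cn] at hβ ⊢
  exact ⟨reflRoot_mem_Cn hα hβ.1, by rw [inner_reflRoot_reflRoot, hβ.2]⟩

lemma exists_int_inner_eq {β : E n} (hβ : β ∈ Cn n) (hx : x ∈ shortBC n) :
    ∃ m : ℤ, ⟪β, x⟫ = m := by
  obtain ⟨y, hy, z, hz, -, rfl⟩ := mem_Cn_iff.1 hβ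
  obtain ⟨p, hp⟩ := exists_int_inner_eq_of_mem_shortBC hy hx
  obtain ⟨q, hq⟩ := exists_int_inner_eq_of_mem_shortBC hz hx
  exact ⟨p - q, by rw [inner_sub_left, hp, hq, Int.cast_sub]⟩

lemma exists_int_pairing_eq {α β : E n} (hα : α ∈ Cn n) (hβ : β ∈ Cn n) :
    ∃ m : ℤ, pairing β α = m := by
  rcases hα with hα | hα
  · have hαα := inner_self_of_mem_longBC hα
    obtain ⟨x, hx, y, hy, -, rfl⟩ := mem_longBC_iff.1 hα
    obtain ⟨p, hp⟩ := exists_int_inner_eq hβ hx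
    obtain ⟨q, hq⟩ := exists_int_inner_eq hβ hy
    refine ⟨p - q, ?_⟩
    rw [pairing, hαα, inner_sub_right, hp, hq, Int.cast_sub]
    ring
  · have hαα := inner_self_of_mem_divBC hα
    obtain ⟨x, hx, rfl⟩ := mem_divBC_iff.1 hα
    obtain ⟨p, hp⟩ := exists_int_inner_eq hβ hx
    refine ⟨p, ?_⟩
    rw [pairing, hαα, real_inner_smul_right, hp]
    ring

lemma isCrystallographic_Cn (n : ℕ) : IsCrystallographic (Cn n) :=
  ⟨fun _ hα _ hβ => reflRoot_mem_Cn hα hβ, fun _ hα _ hβ => exists_int_pairing_eq hα hβ⟩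

lemma exists_eq_add_of_inner_eq_one {α : E n} (hα : α ∈ longBC n) (hx : x ∈ shortBC n)
    (h : ⟪α, x⟫ = 1) : ∃ y ∈ shortBC n, ⟪x, y⟫ = 0 ∧ α = x + y := by
  obtain ⟨a, ha, b, hb, hab, rfl⟩ := mem_longBC_iff.1 hα
  have hxx := inner_self_of_mem_shortBC hx
  rw [inner_sub_left] at h
  rcases eq_or_eq_neg_or_inner_eq_zero ha hx with rfl | rfl | hax
  · exact ⟨-b, neg_mem_shortBC hb, by rw [inner_neg_right, hab, neg_zero], sub_eq_add_neg a b⟩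
  · rw [inner_neg_left, neg_eq_zero, real_inner_comm] at hab
    rw [inner_neg_left] at h
    linarith
  rcases eq_or_eq_neg_or_inner_eq_zero hb hx with rfl | rfl | hbx
  · linarith
  · exact ⟨a, ha, by rw [real_inner_comm, hax], by abel⟩
  · linarith

lemma exists_eq_add_eq_sub_of_add_mem_divBC {α β : E n} (hα : α ∈ longBC n) (hβ : β ∈ longBC n)
    (h : α + β ∈ divBC n) :
    ∃ x ∈ shortBC n, ∃ y ∈ shortBC n, ⟪x, y⟫ = 0 ∧ α = x + y ∧ β = x - y := by
  have hαα := inner_self_of_mem_longBC hα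
  -- Comparing squared lengths gives `α ⟂ β`, so `α + β = 2x` forces `⟪α, x⟫ = 1`.
  have hαβ : ⟪α, β⟫ = 0 := by
    have hsum := inner_self_of_mem_divBC h
    rw [real_inner_add_add_self, hαα, inner_self_of_mem_longBC hβ] at hsum
    linarith
  obtain ⟨x, hx, hsum⟩ := mem_divBC_iff.1 h
  have hαx : ⟪α, x⟫ = 1 := by
    have h₂ : ⟪α, (2 : ℝ) • x⟫ = 2 := by rw [← hsum, inner_add_right, hαα, hαβ, add_zero]
    rw [real_inner_smul_right] at h₂
    linarith
  obtain ⟨y, hy, hxy, rfl⟩ := exists_eq_add_of_inner_eq_one hα hx hαx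
  exact ⟨x, hx, y, hy, hxy, rfl, by linear_combination (norm := module) hsum⟩

end TypeC

section Existence

variable {n : ℕ}

lemma divBC_subset_of_longBC_subset (hn : 2 ≤ n) {Δ : Set (E n)}
    (hcl : ∀ α ∈ Δ, ∀ β ∈ Δ, α + β ∈ Cn n → α + β ∈ Δ) (hΔ : longBC n ⊆ Δ) : divBC n ⊆ Δ := by
  intro v hv
  obtain ⟨x, hx, rfl⟩ := mem_divBC_iff.1 hv
  obtain ⟨y, hy, hxy⟩ := exists_mem_shortBC_inner_eq_zero hn hx
  have hsum : (2 : ℝ) • x = (x + y) + (x - y) := by module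
  rw [hsum] at hv ⊢
  exact hcl _ (hΔ (add_mem_longBC hx hy hxy)) _ (hΔ (sub_mem_longBC hx hy hxy)) (.inr hv)

lemma isSemiClosedSubRS_longBC (hn : 2 ≤ n) :
    IsSemiClosedSubRS (Cn n) (longBC n) (divBC n) ∅ (longBC n) := by
  have hx : eps ⟨0, by lia⟩ ∈ shortBC n := eps_mem_shortBC _
  obtain ⟨y, hy, hxy⟩ := exists_mem_shortBC_inner_eq_zero hn hx
  refine ⟨⟨⟨_, sub_mem_longBC hx hy hxy⟩, Set.subset_union_left,
    fun α hα β hβ => reflRoot_mem_longBC (.inl hα) hβ⟩, fun hcl => ?_,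
    fun α hα β hβ hC hlong => .inl ⟨hα, hβ, .inl (hC.resolve_left hlong)⟩⟩
  have hdiv := mem_divBC_iff.2 ⟨_, hx, rfl⟩
  have hlong := divBC_subset_of_longBC_subset hn hcl subset_rfl hdiv
  linarith [inner_self_of_mem_longBC hlong, inner_self_of_mem_divBC hdiv]

lemma isMaxSemiClosedSubRS_longBC (hn : 2 ≤ n) :
    IsMaxSemiClosedSubRS (Cn n) (longBC n) (divBC n) ∅ (longBC n) :=
  ⟨isSemiClosedSubRS_longBC hn, fun _ hcl hne hss => hne <| hcl.1.2.1.antisymm <|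
    Set.union_subset hss.subset (divBC_subset_of_longBC_subset hn hcl.2 hss.subset)⟩

end Existence

section Uniqueness

/-- The vectors linked to `x` by `Δ`: those which equal `x`, or differ from `x` by an element of
`Δ`, up to sign. For `z` linked to `x` and of the same norm, the identity or a reflection in `Δ`
carries `x` to `z` or to `-z`. -/
def linkedSet {G : Type*} [AddCommGroup G] (Δ : Set G) (x : G) : Set G :=
  {z | z = x ∨ z = -x ∨ x - z ∈ Δ ∨ x + z ∈ Δ}

lemma neg_mem_linkedSet {G : Type*} [AddCommGroup G] {Δ : Set G} {x z : G} :
    -z ∈ linkedSet Δ x ↔ z ∈ linkedSet Δ x := by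
  simp only [linkedSet, Set.mem_ofPred_eq, sub_neg_eq_add, ← sub_eq_add_neg,
    neg_eq_iff_eq_neg, neg_neg]
  tauto

variable {n : ℕ} {Δ : Set (E n)} {x y u v z : E n}

lemma IsSemiClosedSubRS.exists_add_mem_sub_mem
    (h : IsSemiClosedSubRS (Cn n) (longBC n) (divBC n) ∅ Δ) :
    ∃ x ∈ shortBC n, ∃ y ∈ shortBC n,
      ⟪x, y⟫ = 0 ∧ x + y ∈ Δ ∧ x - y ∈ Δ ∧ (2 : ℝ) • x ∉ Δ := by
  obtain ⟨-, hnot, hsemi⟩ := h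
  push Not at hnot
  obtain ⟨α, hα, β, hβ, hC, hsum⟩ := hnot
  obtain ⟨hαl, hβl, hdiv⟩ : α ∈ longBC n ∧ β ∈ longBC n ∧ α + β ∈ divBC n := by
    simpa using hsemi α hα β hβ hC hsum
  obtain ⟨x, hx, y, hy, hxy, rfl, rfl⟩ := exists_eq_add_eq_sub_of_add_mem_divBC hαl hβl hdiv
  have htwo : (x + y) + (x - y) = (2 : ℝ) • x := by module
  exact ⟨x, hx, y, hy, hxy, hα, hβ, htwo ▸ hsum⟩

section

variable (hΔ : ∀ α ∈ Δ, ∀ β ∈ Δ, reflRoot α β ∈ Δ)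
include hΔ

lemma mem_linkedSet_of_sub_mem_of_sub_mem (hx : x ∈ shortBC n) (hu : u ∈ shortBC n)
    (hv : v ∈ shortBC n) (hxu : x - u ∈ Δ) (huv : u - v ∈ Δ) : v ∈ linkedSet Δ x := by
  rcases eq_or_eq_neg_or_inner_eq_zero hx hv with rfl | rfl | hxv₀
  · exact .inl rfl
  · exact .inr (.inl (neg_neg v).symm)
  rcases eq_or_eq_neg_or_inner_eq_zero hx hu with rfl | rfl | hxu₀
  · exact .inr (.inr (.inl huv))
  · refine .inr (.inr (.inr ?_))
    simpa only [neg_add_eq_sub] using sub_mem_comm hΔ huv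
  · have hnorm : ‖u‖ = ‖v‖ := by rw [norm_of_mem_shortBC hu, norm_of_mem_shortBC hv]
    exact .inr (.inr (.inl (sub_mem_trans hΔ hnorm hxu₀ hxv₀ hxu huv)))

lemma mem_linkedSet_of_sub_mem (hx : x ∈ shortBC n) (hu : u ∈ shortBC n) (hv : v ∈ shortBC n)
    (huv : u - v ∈ Δ) (hlink : u ∈ linkedSet Δ x) : v ∈ linkedSet Δ x := by
  have hneg : -u - -v ∈ Δ := by rw [neg_sub_neg]; exact sub_mem_comm hΔ huv
  rcases hlink with rfl | rfl | hxu | hxu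
  · exact .inr (.inr (.inl huv))
  · exact .inr (.inr (.inr (by rwa [neg_neg, sub_neg_eq_add] at hneg)))
  · exact mem_linkedSet_of_sub_mem_of_sub_mem hΔ hx hu hv hxu huv
  · exact neg_mem_linkedSet.1 <| mem_linkedSet_of_sub_mem_of_sub_mem hΔ hx (neg_mem_shortBC hu)
      (neg_mem_shortBC hv) (by rwa [sub_neg_eq_add]) hneg

lemma shortBC_subset_linkedSet (hsub : Δ ⊆ Cn n) (hgen : Cn n ⊆ AddSubgroup.closure Δ)
    (hx : x ∈ shortBC n) : shortBC n ⊆ linkedSet Δ x := by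
  obtain ⟨H, hH⟩ := exists_addSubgroup_sub_mem_iff fun z => neg_mem_linkedSet (Δ := Δ) (x := x)
  have hΔH : Δ ⊆ H := by
    intro α hα
    obtain ⟨u, hu, v, hv, -, rfl⟩ := mem_Cn_iff.1 (hsub hα)
    exact (hH u hu v hv).2 ⟨mem_linkedSet_of_sub_mem hΔ hx hu hv hα,
      mem_linkedSet_of_sub_mem hΔ hx hv hu (sub_mem_comm hΔ hα)⟩
  intro z hz
  by_cases hxz : x = z
  · exact .inl hxz.symm
  have hmem : x - z ∈ H :=
    (AddSubgroup.closure_le H).2 hΔH (hgen (mem_Cn_iff.2 ⟨x, hx, z, hz, hxz, rfl⟩))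
  exact ((hH x hx z hz).1 hmem).1 (.inl rfl)

lemma two_smul_notMem (hlink : shortBC n ⊆ linkedSet Δ x) (hx : x ∈ shortBC n)
    (h2x : (2 : ℝ) • x ∉ Δ) (hz : z ∈ shortBC n) : (2 : ℝ) • z ∉ Δ := by
  have hneg : (2 : ℝ) • -x ∉ Δ := fun h =>
    h2x (by simpa only [smul_neg, neg_neg] using neg_mem_of_reflRoot_mem hΔ h)
  have hnorm : ‖z‖ = ‖x‖ := by rw [norm_of_mem_shortBC hx, norm_of_mem_shortBC hz]
  intro h2z
  rcases hlink hz with rfl | rfl | hxz | hxz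
  · exact h2x h2z
  · exact hneg h2z
  · exact h2x (smul_mem_of_sub_mem hΔ hnorm (sub_mem_comm hΔ hxz) h2z)
  · exact hneg (smul_mem_of_sub_mem hΔ (by rwa [norm_neg])
      (by rwa [sub_neg_eq_add, add_comm]) h2z)

lemma add_mem_of_sub_mem_of_mem_shortBC (hx : x ∈ shortBC n) (hy : y ∈ shortBC n)
    (hxy : ⟪x, y⟫ = 0) (hadd : x + y ∈ Δ) (hsub : x - y ∈ Δ) (hz : z ∈ shortBC n)
    (hxz : ⟪x, z⟫ = 0) (h : x - z ∈ Δ) : x + z ∈ Δ := by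
  rcases eq_or_eq_neg_or_inner_eq_zero hy hz with rfl | rfl | hyz
  · exact hadd
  · rwa [sub_neg_eq_add] at hsub
  · exact add_mem_of_sub_mem hΔ (by rw [norm_of_mem_shortBC hy, norm_of_mem_shortBC hz])
      (by rw [norm_of_mem_shortBC hx, norm_of_mem_shortBC hz]) hxy hxz hyz hsub hadd h

lemma sub_mem_of_inner_eq_zero (hlink : shortBC n ⊆ linkedSet Δ x) (hx : x ∈ shortBC n)
    (hy : y ∈ shortBC n) (hxy : ⟪x, y⟫ = 0) (hadd : x + y ∈ Δ) (hsub : x - y ∈ Δ)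
    (hz : z ∈ shortBC n) (hxz : ⟪x, z⟫ = 0) : x - z ∈ Δ := by
  have hxz' : ⟪x, -z⟫ = 0 := by rw [inner_neg_right, hxz, neg_zero]
  rcases hlink hz with rfl | rfl | h | h
  · exact absurd rfl (ne_of_mem_shortBC_of_inner_eq_zero hx hxz)
  · rw [neg_neg] at hxz'
    exact absurd rfl (ne_of_mem_shortBC_of_inner_eq_zero hx hxz')
  · exact h
  · rw [sub_eq_add_neg]
    exact add_mem_of_sub_mem_of_mem_shortBC hΔ hx hy hxy hadd hsub (neg_mem_shortBC hz) hxz'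
      (by rwa [sub_neg_eq_add])

lemma longBC_subset_of_forall_sub_mem (hx : x ∈ shortBC n)
    (hall : ∀ z ∈ shortBC n, ⟪x, z⟫ = 0 → x - z ∈ Δ) : longBC n ⊆ Δ := by
  have hneg : ∀ z ∈ shortBC n, ⟪-x, z⟫ = 0 → -x - z ∈ Δ := by
    intro z hz hxz
    rw [inner_neg_left, ← inner_neg_right] at hxz
    have h := neg_mem_of_reflRoot_mem hΔ (hall _ (neg_mem_shortBC hz) hxz)
    rwa [sub_neg_eq_add, neg_add'] at h
  intro α hα
  obtain ⟨u, hu, v, hv, huv, rfl⟩ := mem_longBC_iff.1 hα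
  have hvu : ⟪v, u⟫ = 0 := by rw [real_inner_comm, huv]
  rcases eq_or_eq_neg_or_inner_eq_zero hu hx with rfl | rfl | hux
  · exact hall v hv huv
  · exact hneg v hv huv
  rcases eq_or_eq_neg_or_inner_eq_zero hv hx with rfl | rfl | hvx
  · exact sub_mem_comm hΔ (hall u hu hvu)
  · exact sub_mem_comm hΔ (hneg u hu hvu)
  · rw [real_inner_comm] at hvx
    exact sub_mem_trans hΔ (by rw [norm_of_mem_shortBC hx, norm_of_mem_shortBC hv]) hux huv
      (sub_mem_comm hΔ (hall u hu (by rw [real_inner_comm, hux]))) (hall v hv hvx)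

end

lemma IsMaxSemiClosedSubRS.eq_longBC
    (h : IsMaxSemiClosedSubRS (Cn n) (longBC n) (divBC n) ∅ Δ) : Δ = longBC n := by
  obtain ⟨-, hΔC, hΔ⟩ := h.1.1
  obtain ⟨x, hx, y, hy, hxy, hadd, hsub, h2x⟩ := h.1.exists_add_mem_sub_mem
  have hlink : shortBC n ⊆ linkedSet Δ x :=
    shortBC_subset_linkedSet hΔ hΔC (h.subset_closure (isCrystallographic_Cn n)) hx
  refine Set.Subset.antisymm (fun α hα => (hΔC hα).resolve_right fun hdiv => ?_) ?_
  · obtain ⟨z, hz, rfl⟩ := mem_divBC_iff.1 hdiv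
    exact two_smul_notMem hΔ hlink hx h2x hz hα
  · exact longBC_subset_of_forall_sub_mem hΔ hx fun z hz hxz =>
      sub_mem_of_inner_eq_zero hΔ hlink hx hy hxy hadd hsub hz hxz

end Uniqueness

/-- Remark 3.10 for type `C_n`: the set of short roots is the unique maximal
semi-closed subroot system. -/
theorem statement8 {n : ℕ} (hn : 2 ≤ n) :
    IsMaxSemiClosedSubRS (Cn n) (longBC n) (divBC n) (∅ : Set (E n)) (longBC n) ∧
    ∀ Δ : Set (E n),
      IsMaxSemiClosedSubRS (Cn n) (longBC n) (divBC n) ∅ Δ → Δ = longBC n :=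
  ⟨isMaxSemiClosedSubRS_longBC hn, fun _ h => h.eq_longBC⟩

end BdS
end
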